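/- arXiv:1802.01365 — 2 statements merged into one kernel-verified Lean document; each statement's English description precedes it below -/
import Mathlib

section
/- Optimality conditions for the KKT reformulation of the learning problem (Lemma 5.1): Assume (B1)–(B4). Let (α*, y*, u*, λ*) be a local solution to the KKT reformulation (LP̄), and assume (y*,u*,λ*) satisfies the second order sufficient optimality conditions of (P_{α*,y_δ}). Then there exists a unique (p*,q*,z*) ∈ Y × U × Z' such that: (i) Σ_{i=1}^r (DΨ_i(u*) q*)(α_i − α*_i) ≥ 0 for all α ∈ [α̲,ᾱ]; (ii) for all v ∈ Y: ⟨p*, v⟩_Ỹ + λ*(∂²_{yy}e(y*,u*)[p*, v]) + λ*(∂²_{yu}e(y*,u*)[q*, v]) + z*(∂_y e(y*,u*) v) = 0; (iii) for all w ∈ U: ⟨u* − u†, w⟩_Ũ + λ*(∂²_{uy}e(y*,u*)[p*, w]) + Σ_i α*_i D²Ψ_i(u*)[q*, w] + λ*(∂²_{uu}e(y*,u*)[q*, w]) + z*(∂_u e(y*,u*) w) = 0; (iv) ∂_y e(y*,u*) p* + ∂_u e(y*,u*) q* = 0 in Z. -/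
open Filter Topology
open scoped RealInnerProductSpace

/-- The Tikhonov functional `J_{α,yδ}` with real-valued penalty functionals. -/
noncomputable def Jr {Y U Ytil : Type*} [NormedAddCommGroup Y] [NormedSpace ℝ Y]
    [NormedAddCommGroup U] [NormedSpace ℝ U]
    [NormedAddCommGroup Ytil] [InnerProductSpace ℝ Ytil]
    {m r : ℕ} (ιY : Y →L[ℝ] Ytil) (Ψ : Fin r → U → ℝ)
    (α : Fin r → ℝ) (yδ : Fin m → Ytil) (p : Y × U) : ℝ :=
  (1 / (2 * (m : ℝ))) * ∑ j, ‖ιY p.1 - yδ j‖ ^ 2 + ∑ i, α i * Ψ i p.2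

/-- `(y,u,λ)` is a KKT point of the lower level problem `(P_{α,yδ})` (case `U_ad = U`):
the adjoint equation, the optimality equation and the state equation hold. -/
def IsKKTPoint {Y U Ytil Z : Type*} [NormedAddCommGroup Y] [NormedSpace ℝ Y]
    [NormedAddCommGroup U] [NormedSpace ℝ U]
    [NormedAddCommGroup Ytil] [InnerProductSpace ℝ Ytil]
    [NormedAddCommGroup Z] [NormedSpace ℝ Z]
    {m r : ℕ} (ιY : Y →L[ℝ] Ytil) (Ψ : Fin r → U → ℝ) (e : Y × U → Z)
    (yδ : Fin m → Ytil) (α : Fin r → ℝ) (y : Y) (u : U) (lam : Z →L[ℝ] ℝ) : Prop :=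
  (∀ v : Y, ⟪ιY y - (m : ℝ)⁻¹ • ∑ j, yδ j, ιY v⟫ + lam (fderiv ℝ e (y, u) (v, 0)) = 0) ∧
  (∀ w : U, (∑ i, α i * fderiv ℝ (Ψ i) u w) + lam (fderiv ℝ e (y, u) (0, w)) = 0) ∧
  e (y, u) = 0

variable {Y U Util Ytil Z : Type*}
  [NormedAddCommGroup Y] [NormedSpace ℝ Y] [CompleteSpace Y]
  [NormedAddCommGroup U] [NormedSpace ℝ U] [CompleteSpace U]
  [NormedAddCommGroup Util] [InnerProductSpace ℝ Util] [CompleteSpace Util]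
  [NormedAddCommGroup Ytil] [InnerProductSpace ℝ Ytil] [CompleteSpace Ytil]
  [NormedAddCommGroup Z] [NormedSpace ℝ Z] [CompleteSpace Z]

/-! At a point satisfying the second order sufficient conditions the linearized KKT system is a
saddle point operator whose Hessian block is coercive on the kernel of the surjective constraint
derivative, so it is bijective: the Lax–Milgram theorem solves it on the kernel, and the remaining
functional vanishes there, so it factors through the constraint derivative as a multiplier. By the
implicit function theorem the KKT points near the given one therefore contain a differentiable
branch over the parameters, and local optimality along it is a variational inequality for the
derivative of the reduced upper level objective. The saddle point operator being symmetric, solving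
it once with minus the derivative of the objective as right-hand side expresses that derivative
through the mixed second derivative of the Lagrangian; this solution is the adjoint triple, and the
bijectivity makes it unique. -/

section LaxMilgram

variable {V W : Type*} [NormedAddCommGroup V] [NormedSpace ℝ V] {B : V →L[ℝ] V →L[ℝ] ℝ}

theorem surjective_of_isCoercive_of_norm_sq_eq [CompleteSpace V] [NormedAddCommGroup W]
    [InnerProductSpace ℝ W] (hB : IsCoercive B) (T : V ≃ₗ[ℝ] W) (hT : ∀ v, ‖T v‖ ^ 2 = B v v) :
    Function.Surjective B := by
  obtain ⟨C, hC, hBC⟩ := hB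
  have hupper (v : V) : ‖T v‖ ≤ √‖B‖ * ‖v‖ := by
    rw [← sq_le_sq₀ (by positivity) (by positivity), hT, mul_pow, Real.sq_sqrt (norm_nonneg B),
      pow_two, ← mul_assoc]
    exact (le_abs_self _).trans (B.le_opNorm₂ v v)
  have hlower (w : W) : ‖T.symm w‖ ≤ (√C)⁻¹ * ‖w‖ := by
    rw [inv_mul_eq_div, le_div_iff₀' (by positivity), ← sq_le_sq₀ (by positivity) (by positivity),
      mul_pow, Real.sq_sqrt hC.le, pow_two, ← mul_assoc]
    simpa [← hT] using hBC (T.symm w)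
  let S : V ≃L[ℝ] W := T.toContinuousLinearEquivOfBounds _ _ hupper hlower
  have : CompleteSpace W := (completeSpace_congr (e := S.toEquiv) S.isUniformEmbedding).1 ‹_›
  have hcoercive : IsCoercive (B.bilinearComp (S.symm : W →L[ℝ] V) (S.symm : W →L[ℝ] V)) :=
    ⟨1, one_pos, fun w ↦ by
      have hnorm : ‖w‖ ^ 2 = B (S.symm w) (S.symm w) :=
        (congrArg (‖·‖ ^ 2) (S.apply_symm_apply w)).symm.trans (hT (S.symm w))
      simpa [pow_two] using hnorm.le⟩
  intro f
  obtain ⟨w, hw⟩ := hcoercive.continuousLinearEquivOfBilin.surjective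
    ((InnerProductSpace.toDual ℝ W).symm (f.comp (S.symm : W →L[ℝ] V)))
  refine ⟨S.symm w, ContinuousLinearMap.ext fun v ↦ ?_⟩
  simpa [hw] using (hcoercive.continuousLinearEquivOfBilin_apply w (S v)).symm

variable [AddCommGroup W] [Module ℝ W]

/-- The symmetric part of a coercive form, as an inner product. It lives on an algebraic copy `W`
of `V`, so that the Hilbert norm it induces does not clash with the norm of `V`. -/
@[reducible]
noncomputable def coerciveInnerCore (hB : IsCoercive B) (T : V ≃ₗ[ℝ] W) :
    InnerProductSpace.Core ℝ W where
  inner v w := (B (T.symm v) (T.symm w) + B (T.symm w) (T.symm v)) / 2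
  conj_inner_symm v w := by simp [add_comm]
  re_inner_nonneg v := by
    obtain ⟨C, hC, hBC⟩ := hB
    simpa using (by positivity : 0 ≤ C * ‖T.symm v‖ * ‖T.symm v‖).trans (hBC _)
  add_left u v w := by simp only [map_add, add_apply]; ring
  smul_left v w c := by simp only [map_smul, smul_apply, smul_eq_mul, conj_trivial]; ring
  definite v hv := by
    obtain ⟨C, hC, hBC⟩ := hB
    have hle : C * ‖T.symm v‖ * ‖T.symm v‖ ≤ 0 := (hBC _).trans_eq (by simpa using hv)
    by_contra hne
    have : T.symm v ≠ 0 := by simpa using hne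
    exact hle.not_gt (by positivity)

theorem surjective_of_isCoercive_of_linearEquiv [CompleteSpace V] (hB : IsCoercive B)
    (T : V ≃ₗ[ℝ] W) : Function.Surjective B := by
  let _ : NormedAddCommGroup W := (coerciveInnerCore hB T).toNormedAddCommGroup
  let _ : InnerProductSpace ℝ W := .ofCore (coerciveInnerCore hB T).toCore
  refine surjective_of_isCoercive_of_norm_sq_eq hB T fun v ↦ ?_
  have hinner (w : W) : ⟪w, w⟫ = (B (T.symm w) (T.symm w) + B (T.symm w) (T.symm w)) / 2 := rfl
  rw [← real_inner_self_eq_norm_sq, hinner, T.symm_apply_apply, add_self_div_two]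

theorem surjective_of_isCoercive [CompleteSpace V] (hB : IsCoercive B) : Function.Surjective B :=
  surjective_of_isCoercive_of_linearEquiv hB (LinearEquiv.refl ℝ V)

end LaxMilgram

section SaddlePoint

variable {X G : Type*} [NormedAddCommGroup X] [NormedSpace ℝ X] [NormedAddCommGroup G]
  [NormedSpace ℝ G]

theorem exists_comp_eq_of_vanishing_on_ker [CompleteSpace X] [CompleteSpace G] {A : X →L[ℝ] G}
    (hA : Function.Surjective A) {f : X →L[ℝ] ℝ} (hf : ∀ x, A x = 0 → f x = 0) :
    ∃ l : G →L[ℝ] ℝ, l.comp A = f := by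
  have hmem : (f : X →ₗ[ℝ] ℝ) ∈ (A : X →ₗ[ℝ] G).dualMap.range := by
    rw [LinearMap.range_dualMap_eq_dualAnnihilator_ker, Submodule.mem_dualAnnihilator]
    exact hf
  obtain ⟨l, hl⟩ := hmem
  have hlA : l ∘ A = f := congrArg DFunLike.coe hl
  refine ⟨⟨l, ?_⟩, ContinuousLinearMap.ext (congrFun hlA)⟩
  exact (A.isQuotientMap hA).continuous_iff.2 (hlA ▸ f.continuous)

/-- The saddle point operator `(x, l) ↦ (H x + l ∘ A, A x)`, the linearized KKT system of an
equality constrained problem with Lagrangian Hessian `H` and constraint derivative `A`. -/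
noncomputable def saddleOperator (H : X →L[ℝ] X →L[ℝ] ℝ) (A : X →L[ℝ] G) :
    X × (G →L[ℝ] ℝ) →L[ℝ] (X →L[ℝ] ℝ) × G :=
  (H.coprod (ContinuousLinearMap.precomp ℝ A)).prod (A.comp (.fst ℝ X (G →L[ℝ] ℝ)))

@[simp]
theorem saddleOperator_apply (H : X →L[ℝ] X →L[ℝ] ℝ) (A : X →L[ℝ] G) (x : X) (l : G →L[ℝ] ℝ) :
    saddleOperator H A (x, l) = (H x + l.comp A, A x) :=
  rfl

variable {H : X →L[ℝ] X →L[ℝ] ℝ} {A : X →L[ℝ] G}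

theorem saddleOperator_injective (hA : Function.Surjective A)
    (hH : ∃ η > 0, ∀ x, A x = 0 → η * ‖x‖ ^ 2 ≤ H x x) :
    Function.Injective (saddleOperator H A) := by
  obtain ⟨η, hη, hcoercive⟩ := hH
  refine (injective_iff_map_eq_zero _).2 ?_
  rintro ⟨x, l⟩ h
  obtain ⟨hHl, hAx⟩ : H x + l.comp A = 0 ∧ A x = 0 := by simpa using h
  have hHxx : H x x = 0 := by simpa [hAx] using congrArg (· x) hHl
  have hx : x = 0 := by
    by_contra hne
    exact (hcoercive x hAx).not_gt (hHxx ▸ by positivity)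
  have hl : l = 0 := by
    refine ContinuousLinearMap.ext fun z ↦ ?_
    obtain ⟨v, rfl⟩ := hA z
    simpa [hx] using congrArg (· v) hHl
  rw [hx, hl, Prod.mk_zero_zero]

theorem saddleOperator_surjective [CompleteSpace X] [CompleteSpace G]
    (hA : Function.Surjective A) (hH : ∃ η > 0, ∀ x, A x = 0 → η * ‖x‖ ^ 2 ≤ H x x) :
    Function.Surjective (saddleOperator H A) := by
  obtain ⟨η, hη, hcoercive⟩ := hH
  rintro ⟨f, g⟩
  obtain ⟨x₀, rfl⟩ := hA g
  let ι : A.ker →L[ℝ] X := A.ker.subtypeL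
  have hker : IsCoercive (H.bilinearComp ι ι) :=
    ⟨η, hη, fun k ↦ by simpa [ι, pow_two, mul_assoc] using hcoercive k k.2⟩
  have : CompleteSpace A.ker := A.isClosed_ker.completeSpace_coe
  obtain ⟨k, hk⟩ := surjective_of_isCoercive hker ((f - H x₀).comp ι)
  obtain ⟨l, hl⟩ := exists_comp_eq_of_vanishing_on_ker hA (f := f - H (x₀ + k)) fun x hx ↦ by
    have hkx : H k x = f x - H x₀ x := congrArg (· ⟨x, hx⟩) hk
    simp [hkx]
  exact ⟨(x₀ + k, l), by simp [hl]⟩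

end SaddlePoint

section Derivatives

variable {X F G : Type*} [NormedAddCommGroup X] [NormedSpace ℝ X]
  [NormedAddCommGroup F] [NormedSpace ℝ F] [NormedAddCommGroup G] [NormedSpace ℝ G]

theorem hasFDerivAt_fderiv_of_contDiffAt {f : X → F} {x : X} (hf : ContDiffAt ℝ 2 f x) :
    HasFDerivAt (fderiv ℝ f) (fderiv ℝ (fderiv ℝ f) x) x :=
  ((hf.fderiv_right (m := 1) (by norm_num)).differentiableAt one_ne_zero).hasFDerivAt

theorem hasFDerivAt_clm_apply_const {c : X → F →L[ℝ] G} {c' : X →L[ℝ] F →L[ℝ] G} {x : X}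
    (hc : HasFDerivAt c c' x) (v : F) : HasFDerivAt (fun y ↦ c y v) (c'.flip v) x :=
  (ContinuousLinearMap.apply ℝ G v).hasFDerivAt.comp x hc

end Derivatives

section KKTSystem

variable {P X G : Type*} [NormedAddCommGroup P] [NormedSpace ℝ P]
  [NormedAddCommGroup X] [NormedSpace ℝ X] [NormedAddCommGroup G] [NormedSpace ℝ G]

theorem exists_implicitFunction_hasFDerivAt [CompleteSpace P] [CompleteSpace X] [CompleteSpace G]
    {F : P × X → G} {a : P} {ξ : X} (hF : ContDiffAt ℝ 1 F (a, ξ))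
    (hbij : Function.Bijective ((fderiv ℝ F (a, ξ)).comp (.inr ℝ P X))) :
    ∃ (φ : P → X) (φ' : P →L[ℝ] X), φ a = ξ ∧ HasFDerivAt φ φ' a ∧
      (∀ᶠ α in 𝓝 a, F (α, φ α) = F (a, ξ)) ∧ ∀ d, fderiv ℝ F (a, ξ) (d, φ' d) = 0 := by
  have hinv : ((fderiv ℝ F (a, ξ)).comp (.inr ℝ P X)).IsInvertible :=
    ⟨ContinuousLinearEquiv.ofBijective ((fderiv ℝ F (a, ξ)).comp (.inr ℝ P X))
      (LinearMap.ker_eq_bot.2 hbij.1) (LinearMap.range_eq_top.2 hbij.2), rfl⟩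
  have hself := hF.implicitFunction_apply_self one_ne_zero hinv
  have hφ := (hF.hasStrictFDerivAt_implicitFunction one_ne_zero hinv).hasFDerivAt
  have hev := hF.eventually_apply_implicitFunction one_ne_zero hinv
  set φ := hF.implicitFunction one_ne_zero hinv
  refine ⟨φ, _, hself, hφ, hev, fun d ↦ ?_⟩
  have hgraph := (hasFDerivAt_id (𝕜 := ℝ) a).prodMk hφ
  have hFφ : HasFDerivAt F (fderiv ℝ F (a, ξ)) (a, φ a) := by
    rw [hself]
    exact (hF.differentiableAt one_ne_zero).hasFDerivAt
  have hconst : HasFDerivAt (fun α ↦ F (α, φ α)) (0 : P →L[ℝ] G) a :=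
    (hasFDerivAt_const _ a).congr_of_eventuallyEq hev
  exact congrArg (· d) ((hFφ.comp (f := fun α ↦ (α, φ α)) a hgraph).unique hconst)

/-- The Lagrangian of the problem `min f x` subject to `e x = 0`. -/
def lagrangian (f : X → ℝ) (e : X → G) (l : G →L[ℝ] ℝ) (x : X) : ℝ :=
  f x + l (e x)

theorem fderiv_lagrangian {f : X → ℝ} {e : X → G} {x : X} (hf : DifferentiableAt ℝ f x)
    (he : DifferentiableAt ℝ e x) (l : G →L[ℝ] ℝ) :
    fderiv ℝ (lagrangian f e l) x = fderiv ℝ f x + l.comp (fderiv ℝ e x) :=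
  (hf.hasFDerivAt.add (l.hasFDerivAt.comp x he.hasFDerivAt)).fderiv

theorem contDiffAt_lagrangian {n : WithTop ℕ∞} {f : X → ℝ} {e : X → G} {x : X}
    (hf : ContDiffAt ℝ n f x) (he : ContDiffAt ℝ n e x) (l : G →L[ℝ] ℝ) :
    ContDiffAt ℝ n (lagrangian f e l) x :=
  hf.add (he.continuousLinearMap_comp l)

/-- The KKT system of the family of problems `min_x f a x` subject to `e x = 0`, whose zeros
`(a, x, l)` are the KKT points `(x, l)` for the parameter `a`. -/
noncomputable def kktResidual (f : P → X → ℝ) (e : X → G) (t : P × X × (G →L[ℝ] ℝ)) :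
    (X →L[ℝ] ℝ) × G :=
  (fderiv ℝ (lagrangian (f t.1) e t.2.2) t.2.1, e t.2.1)

/-- The mixed second derivative `∂ₐ∂ₓ` of the Lagrangian, which measures how the stationarity
equation responds to the parameter. The parameter direction is the first argument. -/
noncomputable def mixedHessian (f : P → X → ℝ) (e : X → G) (a : P) (l : G →L[ℝ] ℝ) (x : X) :
    P →L[ℝ] X →L[ℝ] ℝ :=
  fderiv ℝ (fun α ↦ fderiv ℝ (lagrangian (f α) e l) x) a

variable {f : P → X → ℝ} {e : X → G} {a : P} {x : X} {l : G →L[ℝ] ℝ}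

theorem contDiffAt_of_uncurry {n : WithTop ℕ∞} (hf : ContDiffAt ℝ n (Function.uncurry f) (a, x)) :
    ContDiffAt ℝ n (f a) x :=
  hf.comp x (contDiffAt_const.prodMk contDiffAt_id)

theorem contDiffAt_kktResidual (hf : ContDiffAt ℝ 2 (Function.uncurry f) (a, x))
    (he : ContDiffAt ℝ 2 e x) : ContDiffAt ℝ 1 (kktResidual f e) (a, x, l) := by
  have hobj : ContDiffAt ℝ 2 (fun q : (P × X × (G →L[ℝ] ℝ)) × X ↦ f q.1.1 q.2) ((a, x, l), x) :=
    hf.comp (f := fun q : (P × X × (G →L[ℝ] ℝ)) × X ↦ (q.1.1, q.2)) ((a, x, l), x) (by fun_prop)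
  have hcon : ContDiffAt ℝ 2 (fun q : (P × X × (G →L[ℝ] ℝ)) × X ↦ e q.2) ((a, x, l), x) :=
    he.comp (f := fun q : (P × X × (G →L[ℝ] ℝ)) × X ↦ q.2) ((a, x, l), x) (by fun_prop)
  have hlag : ContDiffAt ℝ 2
      (fun q : (P × X × (G →L[ℝ] ℝ)) × X ↦ lagrangian (f q.1.1) e q.1.2.2 q.2) ((a, x, l), x) :=
    hobj.add (.clm_apply (by fun_prop) hcon)
  have hgrad : ContDiffAt ℝ 1 (fun t : P × X × (G →L[ℝ] ℝ) ↦
      fderiv ℝ (lagrangian (f t.1) e t.2.2) t.2.1) (a, x, l) :=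
    ContDiffAt.fderiv (f := fun t : P × X × (G →L[ℝ] ℝ) ↦ lagrangian (f t.1) e t.2.2)
      (g := fun t : P × X × (G →L[ℝ] ℝ) ↦ t.2.1) hlag (by fun_prop) (by norm_num)
  exact hgrad.prodMk ((he.of_le one_le_two).comp (f := fun t : P × X × (G →L[ℝ] ℝ) ↦ t.2.1)
    (a, x, l) (by fun_prop))

theorem hasFDerivAt_fderiv_lagrangian_param (hf : ContDiffAt ℝ 2 (Function.uncurry f) (a, x))
    (he : ContDiffAt ℝ 2 e x) :
    HasFDerivAt (fun α ↦ fderiv ℝ (lagrangian (f α) e l) x) (mixedHessian f e a l x) a :=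
  (((contDiffAt_kktResidual hf he (l := l)).differentiableAt one_ne_zero).hasFDerivAt.comp
    (f := fun α ↦ (α, x, l)) a (hasFDerivAt_prodMk_left a (x, l))).fst.differentiableAt.hasFDerivAt

theorem fderiv_kktResidual_apply (hf : ContDiffAt ℝ 2 (Function.uncurry f) (a, x))
    (he : ContDiffAt ℝ 2 e x) (d : P) (s : X × (G →L[ℝ] ℝ)) :
    fderiv ℝ (kktResidual f e) (a, x, l) (d, s) = (mixedHessian f e a l x d, 0) +
      saddleOperator (fderiv ℝ (fderiv ℝ (lagrangian (f a) e l)) x) (fderiv ℝ e x) s := by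
  obtain ⟨δ, μ⟩ := s
  set F' := fderiv ℝ (kktResidual f e) (a, x, l)
  have hF : HasFDerivAt (kktResidual f e) F' (a, x, l) :=
    ((contDiffAt_kktResidual hf he).differentiableAt one_ne_zero).hasFDerivAt
  have he' : DifferentiableAt ℝ e x := he.differentiableAt two_ne_zero
  have hfa : DifferentiableAt ℝ (f a) x :=
    (contDiffAt_of_uncurry hf).differentiableAt two_ne_zero
  have hlag := contDiffAt_lagrangian (contDiffAt_of_uncurry hf) he l
  have hparam : F' (d, 0, 0) = (mixedHessian f e a l x d, 0) := by
    have hslice := hF.comp (f := fun α ↦ (α, x, l)) a (hasFDerivAt_prodMk_left a (x, l))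
    exact congrArg (· d) (hslice.unique
      ((hasFDerivAt_fderiv_lagrangian_param hf he).prodMk (hasFDerivAt_const (e x) a)))
  have hprimal : F' (0, δ, 0) =
      (fderiv ℝ (fderiv ℝ (lagrangian (f a) e l)) x δ, fderiv ℝ e x δ) := by
    have hslice := hF.comp (f := fun x' ↦ (a, x', l)) x
      ((hasFDerivAt_prodMk_right a (x, l)).comp x (hasFDerivAt_prodMk_left x l))
    exact congrArg (· δ)
      (hslice.unique ((hasFDerivAt_fderiv_of_contDiffAt hlag).prodMk he'.hasFDerivAt))
  have hdual : F' (0, 0, μ) = (μ.comp (fderiv ℝ e x), 0) := by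
    have hslice := hF.comp (f := fun l' ↦ (a, x, l')) l
      ((hasFDerivAt_prodMk_right a (x, l)).comp l (hasFDerivAt_prodMk_right x l))
    have hvalue : kktResidual f e ∘ (fun l' ↦ (a, x, l')) =
        fun l' ↦ (fderiv ℝ (f a) x + l'.comp (fderiv ℝ e x), e x) :=
      funext fun l' ↦ Prod.ext (fderiv_lagrangian hfa he' l') rfl
    rw [hvalue] at hslice
    exact congrArg (· μ) (hslice.unique
      (((ContinuousLinearMap.precomp ℝ (fderiv ℝ e x)).hasFDerivAt.const_add _).prodMk
        (hasFDerivAt_const (e x) l)))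
  have hsplit : (d, δ, μ) = (d, 0, 0) + ((0, δ, 0) + (0, 0, μ) : P × X × (G →L[ℝ] ℝ)) := by simp
  rw [hsplit, map_add, map_add, hparam, hprimal, hdual, saddleOperator_apply]
  simp only [Prod.mk_add_mk, add_zero]

theorem exists_differentiable_kkt_branch [CompleteSpace P] [CompleteSpace X] [CompleteSpace G]
    (hf : ContDiffAt ℝ 2 (Function.uncurry f) (a, x)) (he : ContDiffAt ℝ 2 e x)
    (hA : Function.Surjective (fderiv ℝ e x))
    (hH : ∃ η > 0, ∀ δ, fderiv ℝ e x δ = 0 →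
      η * ‖δ‖ ^ 2 ≤ fderiv ℝ (fderiv ℝ (lagrangian (f a) e l)) x δ δ) :
    ∃ (φ : P → X × (G →L[ℝ] ℝ)) (φ' : P →L[ℝ] X × (G →L[ℝ] ℝ)),
      φ a = (x, l) ∧ HasFDerivAt φ φ' a ∧
      (∀ᶠ α in 𝓝 a, kktResidual f e (α, φ α) = kktResidual f e (a, x, l)) ∧
      ∀ d, saddleOperator (fderiv ℝ (fderiv ℝ (lagrangian (f a) e l)) x) (fderiv ℝ e x) (φ' d) =
        -(mixedHessian f e a l x d, 0) := by
  have hpartial : (fderiv ℝ (kktResidual f e) (a, x, l)).comp (.inr ℝ P (X × (G →L[ℝ] ℝ))) =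
      saddleOperator (fderiv ℝ (fderiv ℝ (lagrangian (f a) e l)) x) (fderiv ℝ e x) :=
    ContinuousLinearMap.ext fun s ↦ by simp [fderiv_kktResidual_apply hf he]
  obtain ⟨φ, φ', hφa, hφ, hzero, hφ'⟩ :=
    exists_implicitFunction_hasFDerivAt (contDiffAt_kktResidual hf he (l := l)) (by
      rw [hpartial]
      exact ⟨saddleOperator_injective hA hH, saddleOperator_surjective hA hH⟩)
  refine ⟨φ, φ', hφa, hφ, hzero, fun d ↦ eq_neg_of_add_eq_zero_right ?_⟩
  rw [← fderiv_kktResidual_apply hf he, hφ' d]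

theorem saddleOperator_adjoint_identity {H : X →L[ℝ] X →L[ℝ] ℝ} {A : X →L[ℝ] G}
    (hH : ∀ v w, H v w = H w v) {p δ : X} {z μ : G →L[ℝ] ℝ} {b c : X →L[ℝ] ℝ}
    (hp : saddleOperator H A (p, z) = (b, 0)) (hδ : saddleOperator H A (δ, μ) = (c, 0)) :
    b δ = c p := by
  simp only [saddleOperator_apply, Prod.mk.injEq] at hp hδ
  obtain ⟨⟨rfl, hAp⟩, rfl, hAδ⟩ := hp, hδ
  simp [hAp, hAδ, hH p δ]

theorem existsUnique_adjoint_of_isLocalMinOn [CompleteSpace P] [CompleteSpace X] [CompleteSpace G]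
    {J : X → ℝ} {J' : X →L[ℝ] ℝ} {K : Set P} (hK : Convex ℝ K) (ha : a ∈ K)
    (hJ : HasFDerivAt J J' x)
    (hf : ContDiffAt ℝ 2 (Function.uncurry f) (a, x)) (he : ContDiffAt ℝ 2 e x)
    (hkkt : kktResidual f e (a, x, l) = 0)
    (hmin : IsLocalMinOn (fun t : P × X × (G →L[ℝ] ℝ) ↦ J t.2.1)
      {t | t.1 ∈ K ∧ kktResidual f e t = 0} (a, x, l))
    (hA : Function.Surjective (fderiv ℝ e x))
    (hH : ∃ η > 0, ∀ δ, fderiv ℝ e x δ = 0 →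
      η * ‖δ‖ ^ 2 ≤ fderiv ℝ (fderiv ℝ (lagrangian (f a) e l)) x δ δ) :
    ∃! pz : X × (G →L[ℝ] ℝ), (∀ α ∈ K, 0 ≤ mixedHessian f e a l x (α - a) pz.1) ∧
      saddleOperator (fderiv ℝ (fderiv ℝ (lagrangian (f a) e l)) x) (fderiv ℝ e x) pz =
        (-J', 0) := by
  obtain ⟨φ, φ', hφa, hφ, hzero, hφ'⟩ := exists_differentiable_kkt_branch hf he hA hH
  obtain ⟨⟨p, z⟩, hpz⟩ := saddleOperator_surjective hA hH (-J', 0)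
  refine ⟨(p, z), ⟨fun α hα ↦ ?_, hpz⟩,
    fun s hs ↦ saddleOperator_injective hA hH (hs.2.trans hpz.symm)⟩
  have hreduced : HasFDerivAt (fun α ↦ J (φ α).1) (J'.comp ((.fst ℝ X (G →L[ℝ] ℝ)) ∘L φ')) a :=
    HasFDerivAt.comp (f := fun α ↦ (φ α).1) a (by rwa [hφa]) hφ.fst
  have hminReduced : IsLocalMinOn (fun α ↦ J (φ α).1) K a := by
    have hgraph : Tendsto (fun α ↦ (α, φ α)) (𝓝[K] a)
        (𝓝[{t | t.1 ∈ K ∧ kktResidual f e t = 0}] (a, x, l)) := by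
      refine tendsto_nhdsWithin_iff.2 ⟨?_, ?_⟩
      · rw [← hφa]
        exact (continuousAt_id.prodMk hφ.continuousAt).mono_left nhdsWithin_le_nhds
      · filter_upwards [self_mem_nhdsWithin, nhdsWithin_le_nhds hzero] with β hβ hφβ
        exact ⟨hβ, hφβ.trans hkkt⟩
    filter_upwards [hgraph.eventually hmin] with β hβ
    simpa only [hφa] using hβ
  have hdescent : 0 ≤ J' (φ' (α - a)).1 :=
    hminReduced.hasFDerivWithinAt_nonneg hreduced.hasFDerivWithinAt
      (sub_mem_posTangentConeAt_of_segment_subset (hK.segment_subset ha hα))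
  have hsymm :=
    ((contDiffAt_lagrangian (contDiffAt_of_uncurry hf) he l).isSymmSndFDerivAt (by simp)).eq
  have hadjoint : (-J') (φ' (α - a)).1 = (-mixedHessian f e a l x (α - a)) p :=
    saddleOperator_adjoint_identity hsymm hpz (by rw [Prod.mk.eta, hφ', Prod.neg_mk, neg_zero])
  exact hdescent.trans_eq (neg_injective hadjoint)

end KKTSystem

section Tikhonov

variable {Y U Ytil Z : Type*} [NormedAddCommGroup Y] [NormedSpace ℝ Y]
  [NormedAddCommGroup U] [NormedSpace ℝ U] [NormedAddCommGroup Ytil] [InnerProductSpace ℝ Ytil]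
  [NormedAddCommGroup Z] [NormedSpace ℝ Z] {m r : ℕ} {ιY : Y →L[ℝ] Ytil} {Ψ : Fin r → U → ℝ}
  {e : Y × U → Z} {yδ : Fin m → Ytil} {α : Fin r → ℝ} {x : Y × U} {l : Z →L[ℝ] ℝ}

theorem contDiffAt_uncurry_Jr {n : WithTop ℕ∞} (hΨ : ∀ i, ContDiffAt ℝ n (Ψ i) x.2) :
    ContDiffAt ℝ n (Function.uncurry fun α ↦ Jr ιY Ψ α yδ) (α, x) := by
  have hpenalty (i : Fin r) : ContDiffAt ℝ n (fun t : (Fin r → ℝ) × Y × U ↦ Ψ i t.2.2) (α, x) :=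
    (hΨ i).comp (f := fun t : (Fin r → ℝ) × Y × U ↦ t.2.2) (α, x) (by fun_prop)
  have htracking (j : Fin m) :
      ContDiffAt ℝ n (fun t : (Fin r → ℝ) × Y × U ↦ ‖ιY t.2.1 - yδ j‖ ^ 2) (α, x) :=
    ContDiffAt.norm_sq ℝ (by fun_prop)
  exact (contDiffAt_const.mul (ContDiffAt.sum fun j _ ↦ htracking j)).add
    (ContDiffAt.sum fun i _ ↦ .mul (by fun_prop) (hpenalty i))

theorem hasFDerivAt_Jr (hm : 0 < m) (hΨ : ∀ i, DifferentiableAt ℝ (Ψ i) x.2) :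
    HasFDerivAt (Jr ιY Ψ α yδ)
      ((innerSL ℝ (ιY x.1 - (m : ℝ)⁻¹ • ∑ j, yδ j)).comp (ιY.comp (.fst ℝ Y U)) +
        ∑ i, α i • (fderiv ℝ (Ψ i) x.2).comp (.snd ℝ Y U)) x := by
  have hpenalty (i : Fin r) : HasFDerivAt (fun p : Y × U ↦ Ψ i p.2)
      ((fderiv ℝ (Ψ i) x.2).comp (.snd ℝ Y U)) x :=
    (hΨ i).hasFDerivAt.comp (f := fun p : Y × U ↦ p.2) x hasFDerivAt_snd
  have htracking (j : Fin m) :=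
    (((ιY.comp (.fst ℝ Y U)).hasFDerivAt (x := x)).sub_const (yδ j)).norm_sq
  have hJ := ((HasFDerivAt.fun_sum (u := .univ) fun j _ ↦ htracking j).const_mul
    (1 / (2 * (m : ℝ)))).add
      (HasFDerivAt.fun_sum (u := .univ) fun i _ ↦ (hpenalty i).const_mul (α i))
  refine hJ.congr_fderiv (ContinuousLinearMap.ext fun v ↦ ?_)
  have hm' : (m : ℝ) ≠ 0 := by positivity
  simp only [add_apply, sum_apply, smul_apply, ContinuousLinearMap.comp_apply,
    ContinuousLinearMap.coe_fst', ContinuousLinearMap.coe_snd', coe_innerSL_apply, nsmul_eq_mul,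
    smul_eq_mul, Nat.cast_ofNat, inner_sub_left, inner_smul_left, sum_inner, conj_trivial,
    ← Finset.mul_sum, Finset.sum_sub_distrib, Finset.sum_const, Finset.card_univ,
    Fintype.card_fin]
  field_simp

theorem fderiv_lagrangian_Jr_apply (hm : 0 < m) (hΨ : ∀ i, DifferentiableAt ℝ (Ψ i) x.2)
    (he : DifferentiableAt ℝ e x) (v : Y × U) :
    fderiv ℝ (lagrangian (Jr ιY Ψ α yδ) e l) x v =
      ⟪ιY x.1 - (m : ℝ)⁻¹ • ∑ j, yδ j, ιY v.1⟫ + ∑ i, α i * fderiv ℝ (Ψ i) x.2 v.2 +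
        l (fderiv ℝ e x v) := by
  have hJ : HasFDerivAt (Jr ιY Ψ α yδ) _ x := hasFDerivAt_Jr hm hΨ
  rw [fderiv_lagrangian hJ.differentiableAt he, hJ.fderiv]
  simp [inner_sub_left, inner_smul_left, sum_inner]

theorem clm_prod_eq_zero_iff_forall {L : Y × U →L[ℝ] ℝ} :
    L = 0 ↔ (∀ v, L (v, 0) = 0) ∧ ∀ w, L (0, w) = 0 := by
  rw [ContinuousLinearMap.prod_ext_iff]
  simp only [ContinuousLinearMap.ext_iff, ContinuousLinearMap.comp_apply,
    ContinuousLinearMap.inl_apply, ContinuousLinearMap.inr_apply, zero_apply]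

theorem isKKTPoint_iff_kktResidual_eq_zero (hm : 0 < m) (hΨ : ∀ i, DifferentiableAt ℝ (Ψ i) x.2)
    (he : DifferentiableAt ℝ e x) :
    IsKKTPoint ιY Ψ e yδ α x.1 x.2 l ↔
      kktResidual (fun α ↦ Jr ιY Ψ α yδ) e (α, x, l) = 0 := by
  rw [kktResidual, Prod.mk_eq_zero, clm_prod_eq_zero_iff_forall, and_assoc]
  simp [IsKKTPoint, fderiv_lagrangian_Jr_apply hm hΨ he]

theorem eventually_differentiableAt_of_contDiffAt (hΨ : ∀ i, ContDiffAt ℝ 2 (Ψ i) x.2)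
    (he : ContDiffAt ℝ 2 e x) :
    ∀ᶠ p in 𝓝 x, (∀ i, DifferentiableAt ℝ (Ψ i) p.2) ∧ DifferentiableAt ℝ e p := by
  have hΨ' (i : Fin r) : ∀ᶠ p in 𝓝 x, ContDiffAt ℝ 2 (Ψ i) p.2 :=
    continuousAt_snd.eventually ((hΨ i).eventually (by simp))
  filter_upwards [eventually_all.2 hΨ', he.eventually (by simp)] with p hΨp hep
  exact ⟨fun i ↦ (hΨp i).differentiableAt two_ne_zero, hep.differentiableAt two_ne_zero⟩

theorem fderiv_fderiv_lagrangian_Jr_apply (hm : 0 < m) (hΨ : ∀ i, ContDiffAt ℝ 2 (Ψ i) x.2)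
    (he : ContDiffAt ℝ 2 e x) (δ v : Y × U) :
    fderiv ℝ (fderiv ℝ (lagrangian (Jr ιY Ψ α yδ) e l)) x δ v =
      ⟪ιY δ.1, ιY v.1⟫ + ∑ i, α i * fderiv ℝ (fderiv ℝ (Ψ i)) x.2 δ.2 v.2 +
        l (fderiv ℝ (fderiv ℝ e) x δ v) := by
  have hlag : ContDiffAt ℝ 2 (lagrangian (Jr ιY Ψ α yδ) e l) x :=
    contDiffAt_lagrangian (contDiffAt_of_uncurry (contDiffAt_uncurry_Jr hΨ)) he l
  have htracking : HasFDerivAt (fun p : Y × U ↦ ⟪ιY p.1 - (m : ℝ)⁻¹ • ∑ j, yδ j, ιY v.1⟫)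
      ((innerSL ℝ (ιY v.1)).comp (ιY.comp (.fst ℝ Y U))) x :=
    ((innerSL ℝ (ιY v.1)).hasFDerivAt.comp x
      ((ιY.comp (.fst ℝ Y U)).hasFDerivAt.sub_const _)).congr_of_eventuallyEq
        (.of_forall fun p ↦ real_inner_comm _ _)
  have hpenalty (i : Fin r) : HasFDerivAt (fun p : Y × U ↦ fderiv ℝ (Ψ i) p.2 v.2)
      (((fderiv ℝ (fderiv ℝ (Ψ i)) x.2).flip v.2).comp (.snd ℝ Y U)) x :=
    (hasFDerivAt_clm_apply_const (hasFDerivAt_fderiv_of_contDiffAt (hΨ i)) v.2).comp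
      (f := fun p : Y × U ↦ p.2) x hasFDerivAt_snd
  have hconstraint : HasFDerivAt (fun p : Y × U ↦ l (fderiv ℝ e p v))
      (l.comp ((fderiv ℝ (fderiv ℝ e) x).flip v)) x :=
    l.hasFDerivAt.comp x (hasFDerivAt_clm_apply_const (hasFDerivAt_fderiv_of_contDiffAt he) v)
  have hgradient := ((htracking.add (.fun_sum (u := .univ)
    fun i _ ↦ (hpenalty i).const_mul (α i))).add hconstraint).congr_of_eventuallyEq
      (f₁ := fun p ↦ fderiv ℝ (lagrangian (Jr ιY Ψ α yδ) e l) p v)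
      ((eventually_differentiableAt_of_contDiffAt hΨ he).mono fun p hp ↦
        fderiv_lagrangian_Jr_apply hm hp.1 hp.2 v)
  have hHessian := hasFDerivAt_clm_apply_const (hasFDerivAt_fderiv_of_contDiffAt hlag) v
  simpa [real_inner_comm] using congrArg (· δ) (hHessian.unique hgradient)

theorem mixedHessian_Jr_apply (hm : 0 < m) (hΨ : ∀ i, ContDiffAt ℝ 2 (Ψ i) x.2)
    (he : ContDiffAt ℝ 2 e x) (d : Fin r → ℝ) (v : Y × U) :
    mixedHessian (fun α ↦ Jr ιY Ψ α yδ) e α l x d v = ∑ i, fderiv ℝ (Ψ i) x.2 v.2 * d i := by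
  have hgradient : HasFDerivAt (fun β ↦ fderiv ℝ (lagrangian (Jr ιY Ψ β yδ) e l) x v)
      (∑ i, (fderiv ℝ (Ψ i) x.2 v.2) • (ContinuousLinearMap.proj i : (Fin r → ℝ) →L[ℝ] ℝ)) α := by
    simp only [fderiv_lagrangian_Jr_apply hm (fun i ↦ (hΨ i).differentiableAt two_ne_zero)
      (he.differentiableAt two_ne_zero)]
    exact ((HasFDerivAt.fun_sum fun i _ ↦
      (hasFDerivAt_apply i α).mul_const (fderiv ℝ (Ψ i) x.2 v.2)).const_add _).add_const _
  have hmixed := hasFDerivAt_clm_apply_const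
    (hasFDerivAt_fderiv_lagrangian_param (f := fun β ↦ Jr ιY Ψ β yδ) (a := α) (l := l)
      (contDiffAt_uncurry_Jr hΨ) he) v
  simpa using congrArg (· d) (hmixed.unique hgradient)

theorem saddleOperator_Jr_eq_iff (hm : 0 < m) (hΨ : ∀ i, ContDiffAt ℝ 2 (Ψ i) x.2)
    (he : ContDiffAt ℝ 2 e x) {c : U →L[ℝ] ℝ} {p : Y} {q : U} {z : Z →L[ℝ] ℝ} :
    saddleOperator (fderiv ℝ (fderiv ℝ (lagrangian (Jr ιY Ψ α yδ) e l)) x) (fderiv ℝ e x)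
        ((p, q), z) = (-c.comp (.snd ℝ Y U), 0) ↔
      (∀ v : Y, ⟪ιY p, ιY v⟫ + l (fderiv ℝ (fderiv ℝ e) x (p, 0) (v, 0)) +
        l (fderiv ℝ (fderiv ℝ e) x (0, q) (v, 0)) + z (fderiv ℝ e x (v, 0)) = 0) ∧
      (∀ w : U, c w + l (fderiv ℝ (fderiv ℝ e) x (p, 0) (0, w)) +
        (∑ i, α i * fderiv ℝ (fderiv ℝ (Ψ i)) x.2 q w) +
        l (fderiv ℝ (fderiv ℝ e) x (0, q) (0, w)) + z (fderiv ℝ e x (0, w)) = 0) ∧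
      fderiv ℝ e x (p, 0) + fderiv ℝ e x (0, q) = 0 := by
  have hsplit : (p, q) = (p, 0) + ((0, q) : Y × U) := by simp
  have hDe : fderiv ℝ e x (p, q) = fderiv ℝ e x (p, 0) + fderiv ℝ e x (0, q) := by
    rw [hsplit, map_add]
  have hD2e (v : Y × U) : l (fderiv ℝ (fderiv ℝ e) x (p, q) v) =
      l (fderiv ℝ (fderiv ℝ e) x (p, 0) v) + l (fderiv ℝ (fderiv ℝ e) x (0, q) v) := by
    rw [hsplit, map_add, add_apply, map_add]
  rw [saddleOperator_apply, Prod.mk.injEq, eq_neg_iff_add_eq_zero, clm_prod_eq_zero_iff_forall,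
    and_assoc, hDe]
  refine and_congr (forall_congr' fun v ↦ Eq.congr_left ?_)
    (and_congr_left' (forall_congr' fun w ↦ Eq.congr_left ?_))
  · simp [fderiv_fderiv_lagrangian_Jr_apply hm hΨ he, hD2e, add_assoc]
  · simp only [add_apply, fderiv_fderiv_lagrangian_Jr_apply hm hΨ he, map_zero, inner_zero_right,
      zero_add, hD2e, ContinuousLinearMap.comp_apply, ContinuousLinearMap.coe_snd']
    ring

theorem isLocalMinOn_of_kkt_reformulation (hm : 0 < m) {y : Y} {u : U}
    (he : ContDiffAt ℝ 2 e (y, u)) (hΨ : ∀ i, ContDiffAt ℝ 2 (Ψ i) u) {J : U → ℝ}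
    {K : Set (Fin r → ℝ)}
    (hmin : ∃ V ∈ 𝓝 (α, y, u, l), ∀ t ∈ V, t.1 ∈ K →
      IsKKTPoint ιY Ψ e yδ t.1 t.2.1 t.2.2.1 t.2.2.2 → J u ≤ J t.2.2.1) :
    IsLocalMinOn (fun t : (Fin r → ℝ) × (Y × U) × (Z →L[ℝ] ℝ) ↦ J t.2.1.2)
      {t | t.1 ∈ K ∧ kktResidual (fun α ↦ Jr ιY Ψ α yδ) e t = 0} (α, (y, u), l) := by
  obtain ⟨V, hV, hVmin⟩ := hmin
  have hassoc : ContinuousAt (fun t : (Fin r → ℝ) × (Y × U) × (Z →L[ℝ] ℝ) ↦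
      (t.1, t.2.1.1, t.2.1.2, t.2.2)) (α, (y, u), l) := by fun_prop
  have hprimal : ContinuousAt (fun t : (Fin r → ℝ) × (Y × U) × (Z →L[ℝ] ℝ) ↦ t.2.1)
      (α, (y, u), l) := by fun_prop
  refine eventually_nhdsWithin_iff.2 ?_
  filter_upwards [hassoc.preimage_mem_nhds hV,
    hprimal.eventually (eventually_differentiableAt_of_contDiffAt hΨ he)] with t htV htdiff htK
  exact hVmin _ htV htK.1
    ((isKKTPoint_iff_kktResidual_eq_zero hm htdiff.1 htdiff.2).2 htK.2)

end Tikhonov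

theorem hasFDerivAt_half_norm_sq_sub {U V : Type*} [NormedAddCommGroup U] [NormedSpace ℝ U]
    [NormedAddCommGroup V] [InnerProductSpace ℝ V] (ι : U →L[ℝ] V) (v : V) (u : U) :
    HasFDerivAt (fun w ↦ 2⁻¹ * ‖ι w - v‖ ^ 2) ((innerSL ℝ (ι u - v)).comp ι) u := by
  refine ((ι.hasFDerivAt.sub_const v).norm_sq.const_mul 2⁻¹).congr_fderiv ?_
  ext w
  simp

theorem optimality_conditions_KKT_reformulation_general {Y U Util Ytil Z : Type*}
    [NormedAddCommGroup Y] [NormedSpace ℝ Y] [CompleteSpace Y]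
    [NormedAddCommGroup U] [NormedSpace ℝ U] [CompleteSpace U]
    [NormedAddCommGroup Util] [InnerProductSpace ℝ Util]
    [NormedAddCommGroup Ytil] [InnerProductSpace ℝ Ytil]
    [NormedAddCommGroup Z] [NormedSpace ℝ Z] [CompleteSpace Z]
    {m r : ℕ} (hm : 0 < m) (ιY : Y →L[ℝ] Ytil) (ιU : U →L[ℝ] Util) (e : Y × U → Z)
    (Ψ : Fin r → U → ℝ) (udag : Util) (yδ : Fin m → Ytil) {K : Set (Fin r → ℝ)} (hK : Convex ℝ K)
    {αstar : Fin r → ℝ} {ystar : Y} {ustar : U} {lamstar : Z →L[ℝ] ℝ}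
    (he : ContDiffAt ℝ 2 e (ystar, ustar)) (hΨ : ∀ i, ContDiffAt ℝ 2 (Ψ i) ustar)
    (hDe : Function.Surjective (fderiv ℝ e (ystar, ustar)))
    (hfeas : αstar ∈ K ∧ IsKKTPoint ιY Ψ e yδ αstar ystar ustar lamstar)
    (hlocmin : ∃ V ∈ 𝓝 ((αstar, ystar, ustar, lamstar) :
        (Fin r → ℝ) × Y × U × (Z →L[ℝ] ℝ)),
      ∀ t ∈ V, t.1 ∈ K → IsKKTPoint ιY Ψ e yδ t.1 t.2.1 t.2.2.1 t.2.2.2 →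
        ‖ιU ustar - udag‖ ^ 2 ≤ ‖ιU t.2.2.1 - udag‖ ^ 2)
    (hsosc : ∃ η > 0, ∀ δ : Y × U, fderiv ℝ e (ystar, ustar) δ = 0 →
      η * ‖δ‖ ^ 2 ≤
        fderiv ℝ (fderiv ℝ (lagrangian (Jr ιY Ψ αstar yδ) e lamstar)) (ystar, ustar) δ δ) :
    ∃! pqz : Y × U × (Z →L[ℝ] ℝ),
      (∀ α ∈ K, 0 ≤ ∑ i, fderiv ℝ (Ψ i) ustar pqz.2.1 * (α i - αstar i)) ∧
      (∀ v : Y, ⟪ιY pqz.1, ιY v⟫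
          + lamstar (fderiv ℝ (fderiv ℝ e) (ystar, ustar) (pqz.1, 0) (v, 0))
          + lamstar (fderiv ℝ (fderiv ℝ e) (ystar, ustar) (0, pqz.2.1) (v, 0))
          + pqz.2.2 (fderiv ℝ e (ystar, ustar) (v, 0)) = 0) ∧
      (∀ w : U, ⟪ιU ustar - udag, ιU w⟫
          + lamstar (fderiv ℝ (fderiv ℝ e) (ystar, ustar) (pqz.1, 0) (0, w))
          + (∑ i, αstar i * fderiv ℝ (fderiv ℝ (Ψ i)) ustar pqz.2.1 w)
          + lamstar (fderiv ℝ (fderiv ℝ e) (ystar, ustar) (0, pqz.2.1) (0, w))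
          + pqz.2.2 (fderiv ℝ e (ystar, ustar) (0, w)) = 0) ∧
      fderiv ℝ e (ystar, ustar) (pqz.1, 0)
          + fderiv ℝ e (ystar, ustar) (0, pqz.2.1) = 0 := by
  have hkkt : kktResidual (fun α ↦ Jr ιY Ψ α yδ) e (αstar, (ystar, ustar), lamstar) = 0 :=
    (isKKTPoint_iff_kktResidual_eq_zero hm (fun i ↦ (hΨ i).differentiableAt two_ne_zero)
      (he.differentiableAt two_ne_zero)).1 hfeas.2
  have hmin := (isLocalMinOn_of_kkt_reformulation (J := fun u ↦ ‖ιU u - udag‖ ^ 2) hm he hΨ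
    hlocmin).comp_mono (monotone_mul_left_of_nonneg (by positivity : (0 : ℝ) ≤ 2⁻¹))
  have hJ := (hasFDerivAt_half_norm_sq_sub ιU udag ustar).comp (f := Prod.snd) (ystar, ustar)
    hasFDerivAt_snd
  refine ((Equiv.prodAssoc Y U (Z →L[ℝ] ℝ)).existsUnique_congr fun {pqz} ↦ ?_).1
    (existsUnique_adjoint_of_isLocalMinOn hK hfeas.1 hJ (contDiffAt_uncurry_Jr hΨ) he hkkt hmin
      hDe hsosc)
  obtain ⟨⟨p, q⟩, z⟩ := pqz
  refine and_congr ?_ (saddleOperator_Jr_eq_iff hm hΨ he)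
  simp only [mixedHessian_Jr_apply hm hΨ he, Pi.sub_apply]
  rfl

/-- **Lemma 5.1** (optimality conditions for the KKT reformulation of the learning
problem): under (B1)–(B4), if `(α*,y*,u*,λ*)` is a local solution of the KKT
reformulation `(LP̄)` and `(y*,u*,λ*)` satisfies the second order sufficient optimality
conditions of `(P_{α*,yδ})`, then there exists a unique adjoint triple
`(p*,q*,z*) ∈ Y × U × Z'` satisfying the optimality system (i)–(iv). -/
theorem optimality_conditions_KKT_reformulation
    (hYrefl : Function.Surjective (NormedSpace.inclusionInDoubleDual ℝ Y))
    (hUrefl : Function.Surjective (NormedSpace.inclusionInDoubleDual ℝ U))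
    {m r : ℕ} (hm : 0 < m) (hr : 0 < r)
    (ιY : Y →L[ℝ] Ytil) (hιY : Function.Injective ιY)
    (ιU : U →L[ℝ] Util) (hιU : Function.Injective ιU)
    (e : Y × U → Z) (Ψ : Fin r → U → ℝ)
    (hB1 : ContDiff ℝ 2 e) (hB3 : ∀ i, ContDiff ℝ 2 (Ψ i))
    (hB4 : ∀ p : Y × U, Function.Bijective (fun v : Y => fderiv ℝ e p (v, 0)))
    (udag : Util) (yδ : Fin m → Ytil)
    (αlo αhi : Fin r → ℝ) (hαpos : ∀ i, 0 < αlo i) (hαle : ∀ i, αlo i ≤ αhi i)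
    (αstar : Fin r → ℝ) (ystar : Y) (ustar : U) (lamstar : Z →L[ℝ] ℝ)
    -- `(α*,y*,u*,λ*)` is a local solution of the KKT-reformulation (LP̄):
    (hfeas : (∀ i, αlo i ≤ αstar i ∧ αstar i ≤ αhi i) ∧
      IsKKTPoint ιY Ψ e yδ αstar ystar ustar lamstar)
    (hlocmin : ∃ V ∈ 𝓝 ((αstar, ystar, ustar, lamstar) :
        (Fin r → ℝ) × Y × U × (Z →L[ℝ] ℝ)),
      ∀ t ∈ V, (∀ i, αlo i ≤ t.1 i ∧ t.1 i ≤ αhi i) →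
        IsKKTPoint ιY Ψ e yδ t.1 t.2.1 t.2.2.1 t.2.2.2 →
        ‖ιU ustar - udag‖ ^ 2 ≤ ‖ιU t.2.2.1 - udag‖ ^ 2)
    -- second order sufficient optimality conditions for `(P_{α*,yδ})` at `(y*,u*,λ*)`:
    (hsosc : ∃ η > 0, ∀ δ : Y × U, fderiv ℝ e (ystar, ustar) δ = 0 →
      η * ‖δ‖ ^ 2 ≤
        fderiv ℝ (fderiv ℝ (fun p : Y × U => Jr ιY Ψ αstar yδ p + lamstar (e p)))
          (ystar, ustar) δ δ) :
    ∃! pqz : Y × U × (Z →L[ℝ] ℝ),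
      -- (i) variational inequality for the parameters
      (∀ α : Fin r → ℝ, (∀ i, αlo i ≤ α i ∧ α i ≤ αhi i) →
        0 ≤ ∑ i, fderiv ℝ (Ψ i) ustar pqz.2.1 * (α i - αstar i)) ∧
      -- (ii) adjoint state equation
      (∀ v : Y, ⟪ιY pqz.1, ιY v⟫
          + lamstar (fderiv ℝ (fderiv ℝ e) (ystar, ustar) (pqz.1, 0) (v, 0))
          + lamstar (fderiv ℝ (fderiv ℝ e) (ystar, ustar) (0, pqz.2.1) (v, 0))
          + pqz.2.2 (fderiv ℝ e (ystar, ustar) (v, 0)) = 0) ∧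
      -- (iii) adjoint control equation
      (∀ w : U, ⟪ιU ustar - udag, ιU w⟫
          + lamstar (fderiv ℝ (fderiv ℝ e) (ystar, ustar) (pqz.1, 0) (0, w))
          + (∑ i, αstar i * fderiv ℝ (fderiv ℝ (Ψ i)) ustar pqz.2.1 w)
          + lamstar (fderiv ℝ (fderiv ℝ e) (ystar, ustar) (0, pqz.2.1) (0, w))
          + pqz.2.2 (fderiv ℝ e (ystar, ustar) (0, w)) = 0) ∧
      -- (iv) linearized state equation
      fderiv ℝ e (ystar, ustar) (pqz.1, 0)
          + fderiv ℝ e (ystar, ustar) (0, pqz.2.1) = 0 := by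
  have hsurj : Function.Surjective (fderiv ℝ e (ystar, ustar)) := fun z ↦
    let ⟨v, hv⟩ := (hB4 (ystar, ustar)).surjective z
    ⟨(v, 0), hv⟩
  simp only [forall_and] at hfeas hlocmin ⊢
  exact optimality_conditions_KKT_reformulation_general hm ιY ιU e Ψ udag yδ (convex_Icc αlo αhi)
    hB1.contDiffAt (fun i ↦ (hB3 i).contDiffAt) hsurj hfeas hlocmin hsosc
end

section
/- Optimality conditions for the learning problem with linear state equation (Proposition 6.2): Assume (L1) and (L2), and let (α*, A⁻¹Bu*, u*) be a solution of (LP_lin). Then there exists q* ∈ U such that: (i) Σ_{i=1}^r ⟨K_i u*, K_i q*⟩_{E_i} (α_i − α*_i) ≥ 0 for all α ∈ [α̲,ᾱ]; (ii) for all v ∈ U: ⟨u* − u†, v⟩_Ũ + ⟨A⁻¹B q*, A⁻¹B v⟩_Ỹ + Σ_{i=1}^r α*_i ⟨K_i q*, K_i v⟩_{E_i} = 0; (iii) for all v ∈ U: (1/m) Σ_{j=1}^m ⟨A⁻¹B u* − y_δ,j, A⁻¹B v⟩_Ỹ + Σ_{i=1}^r α*_i ⟨K_i u*, K_i v⟩_{E_i}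 = 0. -/
open Filter Topology
open scoped RealInnerProductSpace

/-- The Tikhonov functional of the lower level problem of `(LP_lin)`, with penalties
`Ψᵢ(u) = ½‖Kᵢu‖²`. -/
noncomputable def Jlin {Y U Ytil : Type*} [NormedAddCommGroup Y] [NormedSpace ℝ Y]
    [NormedAddCommGroup U] [NormedSpace ℝ U]
    [NormedAddCommGroup Ytil] [InnerProductSpace ℝ Ytil]
    {m r : ℕ} {E : Fin r → Type*} [∀ i, NormedAddCommGroup (E i)]
    [∀ i, InnerProductSpace ℝ (E i)]
    (ιY : Y →L[ℝ] Ytil) (K : (i : Fin r) → U →L[ℝ] E i)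
    (α : Fin r → ℝ) (yδ : Fin m → Ytil) (p : Y × U) : ℝ :=
  (1 / (2 * (m : ℝ))) * ∑ j, ‖ιY p.1 - yδ j‖ ^ 2 + ∑ i, (α i / 2) * ‖K i p.2‖ ^ 2

/-- `p = (y,u)` solves the lower level problem of `(LP_lin)` with the linear state
equation `Ay = Bu`. -/
def SolvesLin {Y U Ytil Z : Type*} [NormedAddCommGroup Y] [NormedSpace ℝ Y]
    [NormedAddCommGroup U] [NormedSpace ℝ U]
    [NormedAddCommGroup Ytil] [InnerProductSpace ℝ Ytil]
    [NormedAddCommGroup Z] [NormedSpace ℝ Z]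
    {m r : ℕ} {E : Fin r → Type*} [∀ i, NormedAddCommGroup (E i)]
    [∀ i, InnerProductSpace ℝ (E i)]
    (A : Y →L[ℝ] Z) (B : U →L[ℝ] Z)
    (ιY : Y →L[ℝ] Ytil) (K : (i : Fin r) → U →L[ℝ] E i)
    (α : Fin r → ℝ) (yδ : Fin m → Ytil) (p : Y × U) : Prop :=
  A p.1 = B p.2 ∧ ∀ q : Y × U, A q.1 = B q.2 → Jlin ιY K α yδ p ≤ Jlin ιY K α yδ q

variable {Y U Util Ytil Z : Type*}
  [NormedAddCommGroup Y] [NormedSpace ℝ Y] [CompleteSpace Y]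
  [NormedAddCommGroup U] [NormedSpace ℝ U] [CompleteSpace U]
  [NormedAddCommGroup Util] [InnerProductSpace ℝ Util] [CompleteSpace Util]
  [NormedAddCommGroup Ytil] [InnerProductSpace ℝ Ytil] [CompleteSpace Ytil]
  [NormedAddCommGroup Z] [NormedSpace ℝ Z] [CompleteSpace Z]

/-!
By (L1) the state is `y = A⁻¹Bu`, so with `S = ιY A⁻¹ B` the lower level problem minimizes a
quadratic functional on `U`, whose form `a_α(u, v) = ⟪S u, S v⟫ + ∑ αᵢ ⟪Kᵢ u, Kᵢ v⟫` is coercive by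
(L2). Its minimizer `u_α` is therefore the unique solution of `a_α(u_α, ·) = f` with `f` independent
of `α`, which at `α*` is (iii), and Lax–Milgram gives the solution `q` of the adjoint equation (ii).
Along a segment `α_t` from `α*` to `α`, testing the state equation with `q` and the adjoint equation
with `u_{α_t} - u*` shows that the derivative of the upper level objective at `t = 0⁺` is
`(a_α - a_{α*})(u*, q)`; it is nonnegative by optimality, and this is (i).
-/

section RieszCore

variable {V : Type*} [AddCommGroup V] [Module ℝ V] [UniformSpace V] [IsUniformAddGroup V]
  [ContinuousConstSMul ℝ V]

/- `V` carries only a uniform structure here, so that the norm coming from `core` does not compete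
with a norm already present on `V`. -/
theorem exists_core_inner_eq [hV : CompleteSpace V] (core : InnerProductSpace.Core ℝ V)
    (hcont : ContinuousAt (fun v : V ↦ core.inner v v) 0)
    (hbdd : Bornology.IsVonNBounded ℝ {v : V | RCLike.re (core.inner v v) < 1})
    (f : V →L[ℝ] ℝ) : ∃ w, ∀ v, core.inner w v = f v := by
  let N := core.toNormedAddCommGroupOfTopology hcont hbdd
  let I : @InnerProductSpace ℝ V _ N.toSeminormedAddCommGroup := .ofCoreOfTopology core hcont hbdd
  have huniform : N.toUniformSpace = ‹UniformSpace V› :=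
    IsUniformAddGroup.ext (u := N.toUniformSpace)
      SeminormedAddCommGroup.to_isUniformAddGroup ‹_› rfl
  have hcomplete : @CompleteSpace V N.toUniformSpace := huniform ▸ hV
  exact ⟨(@InnerProductSpace.toDual ℝ V _ N I hcomplete).symm f,
    fun v ↦ @InnerProductSpace.toDual_symm_apply ℝ V _ N I hcomplete v f⟩

end RieszCore

section CoerciveForms

variable {V : Type*} [NormedAddCommGroup V] [NormedSpace ℝ V] {a b : V →L[ℝ] V →L[ℝ] ℝ}

theorem apply_self_nonneg_of_isCoercive (ha : IsCoercive a) (v : V) : 0 ≤ a v v := by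
  obtain ⟨c, hc, hcoer⟩ := ha
  exact le_trans (by positivity) (hcoer v)

theorem eq_zero_of_isCoercive_of_apply_self_eq_zero (ha : IsCoercive a) {v : V}
    (hv : a v v = 0) : v = 0 := by
  obtain ⟨c, hc, hcoer⟩ := ha
  have hle : c * (‖v‖ * ‖v‖) ≤ 0 := by simpa only [mul_assoc, hv] using hcoer v
  exact norm_eq_zero.1 (mul_self_eq_zero.1
    ((nonpos_of_mul_nonpos_right hle hc).antisymm (mul_self_nonneg _)))

/-- The energy inner product `⟪u, v⟫ = a u v` of a symmetric coercive form `a`. -/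
noncomputable abbrev energyCore (ha : IsCoercive a) (hsymm : ∀ u v, a u v = a v u) :
    InnerProductSpace.Core ℝ V where
  inner u v := a u v
  conj_inner_symm u v := hsymm v u
  re_inner_nonneg := apply_self_nonneg_of_isCoercive ha
  add_left u v w := by simp only [map_add, add_apply]
  smul_left u v t := by simp only [map_smul, smul_apply, smul_eq_mul,
    conj_trivial]
  definite _ := eq_zero_of_isCoercive_of_apply_self_eq_zero ha

theorem isVonNBounded_setOf_apply_self_lt_one (ha : IsCoercive a) :
    Bornology.IsVonNBounded ℝ {v : V | a v v < 1} := by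
  obtain ⟨c, hc, hcoer⟩ := ha
  rw [NormedSpace.isVonNBounded_iff, isBounded_iff_forall_norm_le]
  refine ⟨√c⁻¹, fun v (hv : a v v < 1) ↦ Real.le_sqrt_of_sq_le ?_⟩
  rw [← one_div, le_div_iff₀ hc]
  linarith [hcoer v]

theorem exists_apply_eq_of_isCoercive [CompleteSpace V] (ha : IsCoercive a)
    (hsymm : ∀ u v, a u v = a v u) (f : V →L[ℝ] ℝ) : ∃ w, a w = f := by
  have hcont : ContinuousAt (fun v ↦ a v v) 0 := by fun_prop
  obtain ⟨w, hw⟩ := exists_core_inner_eq (energyCore ha hsymm) hcont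
    (isVonNBounded_setOf_apply_self_lt_one ha) f
  exact ⟨w, ContinuousLinearMap.ext hw⟩

/-- The energy `½ a(u, u) - f(u)`, whose stationary points solve `a u = f` for symmetric `a`. -/
noncomputable def quadraticEnergy (a : V →L[ℝ] V →L[ℝ] ℝ) (f : V →L[ℝ] ℝ) (u : V) : ℝ :=
  1 / 2 * a u u - f u

theorem quadraticEnergy_add (hsymm : ∀ u v, a u v = a v u) (f : V →L[ℝ] ℝ) (u h : V) :
    quadraticEnergy a f (u + h) = quadraticEnergy a f u + (a u h - f h) + 1 / 2 * a h h := by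
  simp only [quadraticEnergy, map_add, add_apply, hsymm h u]
  ring

theorem forall_quadraticEnergy_le_iff (hsymm : ∀ u v, a u v = a v u) (hnonneg : ∀ v, 0 ≤ a v v)
    {f : V →L[ℝ] ℝ} {u : V} :
    (∀ v, quadraticEnergy a f u ≤ quadraticEnergy a f v) ↔ a u = f := by
  constructor
  · refine fun hmin ↦ ContinuousLinearMap.ext fun h ↦ ?_
    have hquad (t : ℝ) : 0 ≤ 1 / 2 * a h h * (t * t) + (a u h - f h) * t + 0 := by
      have hle := hmin (u + t • h)
      simp only [quadraticEnergy_add hsymm, map_smul, smul_apply,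
        smul_eq_mul] at hle
      linarith
    have hdiscrim := discrim_le_zero hquad
    rw [discrim, mul_zero, sub_zero] at hdiscrim
    exact sub_eq_zero.1 (sq_nonpos_iff _ |>.1 hdiscrim)
  · rintro rfl v
    have hexpand := quadraticEnergy_add hsymm (a u) u (v - u)
    rw [add_sub_cancel] at hexpand
    linarith [hnonneg (v - u)]

theorem exists_pos_forall_mul_norm_le_lineMap (ha : IsCoercive a) (hb : IsCoercive b) :
    ∃ c > 0, ∀ t ∈ Set.Icc (0 : ℝ) 1, ∀ v, c * ‖v‖ * ‖v‖ ≤ AffineMap.lineMap a b t v v := by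
  obtain ⟨ca, hca, ha⟩ := ha
  obtain ⟨cb, hcb, hb⟩ := hb
  refine ⟨min ca cb, lt_min hca hcb, fun t ⟨ht₀, ht₁⟩ v ↦ ?_⟩
  have hav : min ca cb * ‖v‖ * ‖v‖ ≤ a v v := le_trans (by gcongr; exact min_le_left _ _) (ha v)
  have hbv : min ca cb * ‖v‖ * ‖v‖ ≤ b v v := le_trans (by gcongr; exact min_le_right _ _) (hb v)
  calc min ca cb * ‖v‖ * ‖v‖
      = (1 - t) * (min ca cb * ‖v‖ * ‖v‖) + t * (min ca cb * ‖v‖ * ‖v‖) := by ring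
    _ ≤ (1 - t) * a v v + t * b v v :=
        add_le_add (mul_le_mul_of_nonneg_left hav (sub_nonneg.2 ht₁))
          (mul_le_mul_of_nonneg_left hbv ht₀)
    _ = AffineMap.lineMap a b t v v := by
        rw [AffineMap.lineMap_apply_module]
        rfl

theorem norm_sub_le_of_apply_eq {c : ℝ} (hc : 0 < c) (hcoer : ∀ v, c * ‖v‖ * ‖v‖ ≤ b v v)
    {u w : V} (hw : b w = a u) : ‖w - u‖ ≤ ‖(b - a) u‖ / c := by
  rcases (norm_nonneg (w - u)).eq_or_lt with hzero | hpos
  · rw [← hzero]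
    positivity
  rw [le_div_iff₀' hc]
  refine le_of_mul_le_mul_right ?_ hpos
  calc c * ‖w - u‖ * ‖w - u‖ ≤ b (w - u) (w - u) := hcoer _
    _ = -(b - a) u (w - u) := by
        simp only [map_sub b, hw, sub_apply]
        ring
    _ ≤ ‖(b - a) u‖ * ‖w - u‖ := (neg_le_abs _).trans (((b - a) u).le_opNorm _)

theorem apply_sub_eq_of_adjoint {φ : V →L[ℝ] ℝ} {u w q : V} (hw : b w = a u)
    (hq : ∀ v, a v q = -φ v) : φ (w - u) = (b - a) w q := by
  have hwq : b w q = a u q := by rw [hw]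
  rw [map_sub, sub_apply, sub_apply]
  linarith [hq u, hq w]

end CoerciveForms

section Sensitivity

variable {V : Type*} [NormedAddCommGroup V] [NormedSpace ℝ V] {a b : V →L[ℝ] V →L[ℝ] ℝ}
  {w : ℝ → V} {q : V}

theorem isBigO_sub_of_lineMap_apply_eq (ha : IsCoercive a) (hb : IsCoercive b)
    (hw : ∀ t ∈ Set.Icc (0 : ℝ) 1, AffineMap.lineMap a b t (w t) = a (w 0)) :
    (fun t ↦ w t - w 0) =O[𝓝[Set.Icc 0 1] 0] fun t : ℝ ↦ t := by
  obtain ⟨c, hc, hcoer⟩ := exists_pos_forall_mul_norm_le_lineMap ha hb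
  refine Asymptotics.IsBigO.of_bound (‖(b - a) (w 0)‖ / c)
    (eventually_nhdsWithin_of_forall fun t ht ↦ ?_)
  have hbound := norm_sub_le_of_apply_eq hc (hcoer t ht) (hw t ht)
  rwa [AffineMap.lineMap_apply_module', add_sub_cancel_right, smul_apply,
    norm_smul, mul_div_assoc, mul_comm] at hbound

theorem hasDerivWithinAt_comp_of_adjoint (ha : IsCoercive a) (hb : IsCoercive b)
    (hw : ∀ t ∈ Set.Icc (0 : ℝ) 1, AffineMap.lineMap a b t (w t) = a (w 0))
    {F : V → ℝ} {φ : V →L[ℝ] ℝ} (hF : HasFDerivAt F φ (w 0)) (hq : ∀ v, a v q = -φ v) :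
    HasDerivWithinAt (fun t ↦ F (w t)) ((b - a) (w 0) q) (Set.Icc 0 1) 0 := by
  have hO := isBigO_sub_of_lineMap_apply_eq ha hb hw
  have hwlim : Tendsto (fun t ↦ w t - w 0) (𝓝[Set.Icc 0 1] 0) (𝓝 0) :=
    hO.trans_tendsto (tendsto_id.mono_left nhdsWithin_le_nhds)
  have hrem : (fun t ↦ F (w t) - F (w 0) - φ (w t - w 0)) =o[𝓝[Set.Icc 0 1] 0] fun t : ℝ ↦ t :=
    (hF.isLittleO.comp_tendsto (tendsto_sub_nhds_zero_iff.1 hwlim)).trans_isBigO hO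
  have hlin : (fun t ↦ t * (b - a) (w t - w 0) q) =o[𝓝[Set.Icc 0 1] 0] fun t : ℝ ↦ t := by
    have hlim : Tendsto (fun t ↦ (b - a) (w t - w 0) q) (𝓝[Set.Icc 0 1] 0) (𝓝 0) := by
      have hcont := ((b - a).flip q).continuous.tendsto 0
      rw [map_zero] at hcont
      exact hcont.comp hwlim
    simpa using (Asymptotics.isBigO_refl (fun t : ℝ ↦ t) _).mul_isLittleO
      ((Asymptotics.isLittleO_one_iff ℝ).2 hlim)
  rw [hasDerivWithinAt_iff_isLittleO]
  simp only [sub_zero, smul_eq_mul]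
  refine (hrem.add hlin).congr' (eventually_nhdsWithin_of_forall fun t ht ↦ ?_) .rfl
  have hadjoint := apply_sub_eq_of_adjoint (hw t ht) hq
  simp only [AffineMap.lineMap_apply_module', add_sub_cancel_right,
    smul_apply, smul_eq_mul] at hadjoint
  simp only [hadjoint, map_sub (b - a), sub_apply]
  ring

theorem sub_apply_nonneg_of_forall_le [CompleteSpace V] (ha : IsCoercive a) (hb : IsCoercive b)
    (hasymm : ∀ u v, a u v = a v u) (hbsymm : ∀ u v, b u v = b v u)
    {u : V} {F : V → ℝ} {φ : V →L[ℝ] ℝ} (hF : HasFDerivAt F φ u) (hq : ∀ v, a v q = -φ v)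
    (hmin : ∀ t ∈ Set.Icc (0 : ℝ) 1, ∀ w, AffineMap.lineMap a b t w = a u → F u ≤ F w) :
    0 ≤ (b - a) u q := by
  have hsolvable (t : ℝ) : ∃ w, t ∈ Set.Icc (0 : ℝ) 1 → AffineMap.lineMap a b t w = a u := by
    by_cases ht : t ∈ Set.Icc (0 : ℝ) 1
    · obtain ⟨c, hc, hcoer⟩ := exists_pos_forall_mul_norm_le_lineMap ha hb
      have hsymm (v v' : V) : AffineMap.lineMap a b t v v' = AffineMap.lineMap a b t v' v := by
        simp only [AffineMap.lineMap_apply_module, add_apply, smul_apply, hasymm v v', hbsymm v v']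
      obtain ⟨w, hw⟩ := exists_apply_eq_of_isCoercive ⟨c, hc, hcoer t ht⟩ hsymm (a u)
      exact ⟨w, fun _ ↦ hw⟩
    · exact ⟨0, fun h ↦ absurd h ht⟩
  choose w hw using hsolvable
  have hw₀ : w 0 = u := by
    have heq := hw 0 (Set.left_mem_Icc.2 zero_le_one)
    rw [AffineMap.lineMap_apply_zero] at heq
    refine sub_eq_zero.1 (eq_zero_of_isCoercive_of_apply_self_eq_zero ha ?_)
    rw [map_sub a, heq, sub_self, zero_apply]
  subst hw₀
  have hloc : IsLocalMinOn (fun t ↦ F (w t)) (Set.Icc 0 1) 0 :=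
    IsMinOn.localize fun t ht ↦ hmin t ht _ (hw t ht)
  have hcone : (1 : ℝ) ∈ posTangentConeAt (Set.Icc 0 1) 0 :=
    mem_posTangentConeAt_of_segment_subset (by rw [zero_add, segment_eq_Icc zero_le_one])
  simpa using hloc.hasFDerivWithinAt_nonneg
    (hasDerivWithinAt_comp_of_adjoint ha hb hw hF hq).hasFDerivWithinAt hcone

end Sensitivity

theorem hasFDerivAt_half_norm_sub_sq {V F : Type*} [NormedAddCommGroup V] [NormedSpace ℝ V]
    [NormedAddCommGroup F] [InnerProductSpace ℝ F] (ι : V →L[ℝ] F) (z : F) (u : V) :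
    HasFDerivAt (fun v ↦ 1 / 2 * ‖ι v - z‖ ^ 2) (innerSL ℝ (ι u - z) ∘L ι) u := by
  have hsq := ((ι.hasFDerivAt (x := u)).sub_const z).norm_sq.const_mul (1 / 2 : ℝ)
  rwa [← Nat.cast_smul_eq_nsmul ℝ 2, smul_smul, Nat.cast_two, one_div_mul_cancel two_ne_zero,
    one_smul] at hsq

section TikhonovForm

variable {V G : Type*} [NormedAddCommGroup V] [NormedSpace ℝ V]
  [NormedAddCommGroup G] [InnerProductSpace ℝ G] {m r : ℕ}
  {E : Fin r → Type*} [∀ i, NormedAddCommGroup (E i)] [∀ i, InnerProductSpace ℝ (E i)]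
  (S : V →L[ℝ] G) (K : (i : Fin r) → V →L[ℝ] E i)

/-- The pullback `(u, v) ↦ ⟪T u, T v⟫` of the inner product along `T`. -/
noncomputable def pullbackInner (T : V →L[ℝ] G) : V →L[ℝ] V →L[ℝ] ℝ :=
  (innerSL ℝ).bilinearComp T T

/-- The form `(u, v) ↦ ∑ αᵢ ⟪Kᵢ u, Kᵢ v⟫` of the penalty `∑ αᵢ Ψᵢ`. -/
noncomputable def penaltyForm (α : Fin r → ℝ) : V →L[ℝ] V →L[ℝ] ℝ :=
  ∑ i, α i • pullbackInner (K i)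

/-- The form `(u, v) ↦ ⟪S u, S v⟫ + ∑ αᵢ ⟪Kᵢ u, Kᵢ v⟫` of the lower level problem reduced to the
control, for the control-to-observation map `S`. -/
noncomputable def tikhonovForm (α : Fin r → ℝ) : V →L[ℝ] V →L[ℝ] ℝ :=
  pullbackInner S + penaltyForm K α

/-- The averaged data `v ↦ (1/m) ∑ ⟪yδⱼ, S v⟫`, the right-hand side of the reduced optimality
condition. -/
noncomputable def dataFunctional (yδ : Fin m → G) : V →L[ℝ] ℝ :=
  (1 / (m : ℝ)) • ∑ j, (innerSL ℝ (yδ j)).comp S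

theorem pullbackInner_apply (T : V →L[ℝ] G) (u v : V) : pullbackInner T u v = ⟪T u, T v⟫ := rfl

theorem penaltyForm_apply (α : Fin r → ℝ) (u v : V) :
    penaltyForm K α u v = ∑ i, α i * ⟪K i u, K i v⟫ := by
  simp [penaltyForm, pullbackInner_apply]

theorem tikhonovForm_apply (α : Fin r → ℝ) (u v : V) :
    tikhonovForm S K α u v = ⟪S u, S v⟫ + ∑ i, α i * ⟪K i u, K i v⟫ := by
  simp [tikhonovForm, pullbackInner_apply, penaltyForm_apply]

theorem dataFunctional_apply (yδ : Fin m → G) (v : V) :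
    dataFunctional S yδ v = 1 / (m : ℝ) * ∑ j, ⟪yδ j, S v⟫ := by
  simp [dataFunctional]

theorem tikhonovForm_symm (α : Fin r → ℝ) (u v : V) :
    tikhonovForm S K α u v = tikhonovForm S K α v u := by
  simp only [tikhonovForm_apply, real_inner_comm]

theorem tikhonovForm_sub (α β : Fin r → ℝ) :
    tikhonovForm S K β - tikhonovForm S K α = penaltyForm K (β - α) := by
  ext u v
  simp only [sub_apply, tikhonovForm_apply, penaltyForm_apply, Pi.sub_apply, sub_mul,
    Finset.sum_sub_distrib, add_sub_add_left_eq_sub]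

theorem lineMap_tikhonovForm (α β : Fin r → ℝ) (t : ℝ) :
    AffineMap.lineMap (tikhonovForm S K α) (tikhonovForm S K β) t =
      tikhonovForm S K (AffineMap.lineMap α β t) := by
  rw [AffineMap.lineMap_apply_module', tikhonovForm_sub, ← eq_sub_iff_add_eq, tikhonovForm_sub,
    AffineMap.lineMap_apply_module', add_sub_cancel_right]
  simp only [penaltyForm, Finset.smul_sum, smul_smul, Pi.smul_apply, smul_eq_mul]

theorem isCoercive_tikhonovForm {α : Fin r → ℝ} (hα : ∀ i, 0 < α i)
    (hK : ∃ ζ > (0 : ℝ), ∀ u, ζ * ‖u‖ ^ 2 ≤ ∑ i, ‖K i u‖ ^ 2) :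
    IsCoercive (tikhonovForm S K α) := by
  obtain ⟨ζ, hζ, hK⟩ := hK
  obtain ⟨c, hc, hcα⟩ : ∃ c > 0, ∀ i, c ≤ α i := by
    obtain ⟨c, hc, hlt⟩ := Pi.exists_forall_pos_add_lt hα
    exact ⟨c, hc, fun i ↦ by simpa using (hlt i).le⟩
  refine ⟨c * ζ, mul_pos hc hζ, fun u ↦ ?_⟩
  calc c * ζ * ‖u‖ * ‖u‖ = c * (ζ * ‖u‖ ^ 2) := by ring
    _ ≤ c * ∑ i, ‖K i u‖ ^ 2 := by gcongr; exact hK u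
    _ = ∑ i, c * ‖K i u‖ ^ 2 := Finset.mul_sum ..
    _ ≤ ∑ i, α i * ‖K i u‖ ^ 2 := by gcongr with i; exact hcα i
    _ ≤ ‖S u‖ ^ 2 + ∑ i, α i * ‖K i u‖ ^ 2 := le_add_of_nonneg_left (sq_nonneg _)
    _ = tikhonovForm S K α u u := by simp only [tikhonovForm_apply, real_inner_self_eq_norm_sq]

theorem penaltyForm_sub_apply_nonneg_of_forall_le [CompleteSpace V]
    (hK : ∃ ζ > (0 : ℝ), ∀ u, ζ * ‖u‖ ^ 2 ≤ ∑ i, ‖K i u‖ ^ 2) {α β : Fin r → ℝ}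
    (hα : ∀ i, 0 < α i) (hβ : ∀ i, 0 < β i) {u q : V} {F : V → ℝ} {φ : V →L[ℝ] ℝ}
    (hF : HasFDerivAt F φ u) (hq : ∀ v, tikhonovForm S K α v q = -φ v)
    (hmin : ∀ t ∈ Set.Icc (0 : ℝ) 1, ∀ w,
      tikhonovForm S K (AffineMap.lineMap α β t) w = tikhonovForm S K α u → F u ≤ F w) :
    0 ≤ penaltyForm K (β - α) u q := by
  rw [← tikhonovForm_sub S]
  exact sub_apply_nonneg_of_forall_le (isCoercive_tikhonovForm S K hα hK)
    (isCoercive_tikhonovForm S K hβ hK) (tikhonovForm_symm S K α) (tikhonovForm_symm S K β) hF hq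
    fun t ht w hw ↦ hmin t ht w (lineMap_tikhonovForm S K α β t ▸ hw)

theorem tikhonovForm_sub_dataFunctional_apply (hm : m ≠ 0) (α : Fin r → ℝ) (yδ : Fin m → G)
    (u v : V) :
    tikhonovForm S K α u v - dataFunctional S yδ v =
      1 / (m : ℝ) * ∑ j, ⟪S u - yδ j, S v⟫ + ∑ i, α i * ⟪K i u, K i v⟫ := by
  simp only [tikhonovForm_apply, dataFunctional_apply, inner_sub_left, Finset.sum_sub_distrib,
    Finset.sum_const, Finset.card_univ, Fintype.card_fin, nsmul_eq_mul]
  field_simp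
  ring

end TikhonovForm

section LowerLevel

variable {X V G W : Type*} [NormedAddCommGroup X] [NormedSpace ℝ X]
  [NormedAddCommGroup V] [NormedSpace ℝ V] [NormedAddCommGroup G] [InnerProductSpace ℝ G]
  [NormedAddCommGroup W] [NormedSpace ℝ W] {m r : ℕ}
  {E : Fin r → Type*} [∀ i, NormedAddCommGroup (E i)] [∀ i, InnerProductSpace ℝ (E i)]

theorem jlin_eq_quadraticEnergy_add (hm : m ≠ 0) (ι : X →L[ℝ] G) (S : V →L[ℝ] G)
    (K : (i : Fin r) → V →L[ℝ] E i) (α : Fin r → ℝ) (yδ : Fin m → G) {x : X} {u : V}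
    (hx : ι x = S u) :
    Jlin ι K α yδ (x, u) = quadraticEnergy (tikhonovForm S K α) (dataFunctional S yδ) u +
      1 / (2 * (m : ℝ)) * ∑ j, ‖yδ j‖ ^ 2 := by
  have hmisfit : ∑ j, ‖S u - yδ j‖ ^ 2 =
      m * ‖S u‖ ^ 2 - 2 * ∑ j, ⟪yδ j, S u⟫ + ∑ j, ‖yδ j‖ ^ 2 := by
    simp only [norm_sub_sq_real, Finset.sum_add_distrib, Finset.sum_sub_distrib, Finset.sum_const,
      Finset.card_univ, Fintype.card_fin, nsmul_eq_mul, Finset.mul_sum, real_inner_comm (S u)]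
  have hpenalty : ∑ i, α i / 2 * ‖K i u‖ ^ 2 = 1 / 2 * ∑ i, α i * ‖K i u‖ ^ 2 := by
    rw [Finset.mul_sum]
    exact Finset.sum_congr rfl fun i _ ↦ by ring
  simp only [Jlin, quadraticEnergy, tikhonovForm_apply, dataFunctional_apply, hx, hmisfit,
    hpenalty, real_inner_self_eq_norm_sq]
  field_simp
  ring

theorem solvesLin_symm_apply_iff (hm : m ≠ 0) (A : X ≃L[ℝ] W) (B : V →L[ℝ] W) (ι : X →L[ℝ] G)
    (K : (i : Fin r) → V →L[ℝ] E i) (hK : ∃ ζ > (0 : ℝ), ∀ u, ζ * ‖u‖ ^ 2 ≤ ∑ i, ‖K i u‖ ^ 2)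
    {α : Fin r → ℝ} (hα : ∀ i, 0 < α i) (yδ : Fin m → G) (u : V) :
    SolvesLin (A : X →L[ℝ] W) B ι K α yδ (A.symm (B u), u) ↔
      tikhonovForm (ι ∘L A.symm ∘L B) K α u = dataFunctional (ι ∘L A.symm ∘L B) yδ := by
  set S : V →L[ℝ] G := ι ∘L A.symm ∘L B
  have hJ (v : V) := jlin_eq_quadraticEnergy_add hm ι S K α yδ (x := A.symm (B v)) (u := v) rfl
  rw [← forall_quadraticEnergy_le_iff (tikhonovForm_symm S K α)
    (apply_self_nonneg_of_isCoercive (isCoercive_tikhonovForm S K hα hK))]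
  constructor
  · rintro ⟨-, hmin⟩ v
    have hle := hmin (A.symm (B v), v) (A.apply_symm_apply _)
    rwa [hJ, hJ, add_le_add_iff_right] at hle
  · refine fun hmin ↦ ⟨A.apply_symm_apply _, fun ⟨x, v⟩ hxv ↦ ?_⟩
    obtain rfl : x = A.symm (B v) := A.eq_symm_apply.2 hxv
    rw [hJ, hJ, add_le_add_iff_right]
    exact hmin v

end LowerLevel

theorem convex_setOf_forall_le_and_le {ι : Type*} (lo hi : ι → ℝ) :
    Convex ℝ {x : ι → ℝ | ∀ i, lo i ≤ x i ∧ x i ≤ hi i} := by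
  rw [show {x : ι → ℝ | ∀ i, lo i ≤ x i ∧ x i ≤ hi i} = Set.Icc lo hi from
    Set.ext fun _ ↦ forall_and]
  exact convex_Icc lo hi

theorem equivOfBijective_symm_apply {X W : Type*} [NormedAddCommGroup X] [NormedSpace ℝ X]
    [CompleteSpace X] [NormedAddCommGroup W] [NormedSpace ℝ W] [CompleteSpace W]
    (A : X →L[ℝ] W) (hA : Function.Bijective A) (w : W) :
    (Equiv.ofBijective A hA).symm w =
      (ContinuousLinearEquiv.ofBijective A (LinearMap.ker_eq_bot.2 hA.1)
        (LinearMap.range_eq_top.2 hA.2)).symm w :=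
  (Equiv.symm_apply_eq _).2 (ContinuousLinearEquiv.ofBijective_apply_symm_apply A _ _ w).symm

theorem linear_learning_problem_optimality_conditions_general {X V F G W : Type*}
    [NormedAddCommGroup X] [NormedSpace ℝ X]
    [NormedAddCommGroup V] [NormedSpace ℝ V] [CompleteSpace V]
    [NormedAddCommGroup F] [InnerProductSpace ℝ F]
    [NormedAddCommGroup G] [InnerProductSpace ℝ G]
    [NormedAddCommGroup W] [NormedSpace ℝ W] {m r : ℕ} (hm : m ≠ 0)
    {E : Fin r → Type*} [∀ i, NormedAddCommGroup (E i)] [∀ i, InnerProductSpace ℝ (E i)]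
    (ιX : X →L[ℝ] G) (ιV : V →L[ℝ] F) (A : X ≃L[ℝ] W) (B : V →L[ℝ] W)
    (K : (i : Fin r) → V →L[ℝ] E i) (udag : F) (yδ : Fin m → G)
    {P : Set (Fin r → ℝ)} (hP : Convex ℝ P) (hPpos : ∀ α ∈ P, ∀ i, 0 < α i)
    (hK : ∃ ζ > (0 : ℝ), ∀ u, ζ * ‖u‖ ^ 2 ≤ ∑ i, ‖K i u‖ ^ 2)
    {αstar : Fin r → ℝ} (hαstar : αstar ∈ P) {ustar : V}
    (hsol : SolvesLin (A : X →L[ℝ] W) B ιX K αstar yδ (A.symm (B ustar), ustar))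
    (hopt : ∀ α ∈ P, ∀ p : X × V, SolvesLin (A : X →L[ℝ] W) B ιX K α yδ p →
      ‖ιV ustar - udag‖ ^ 2 ≤ ‖ιV p.2 - udag‖ ^ 2) :
    ∃ qstar : V,
      (∀ α ∈ P, 0 ≤ ∑ i, ⟪K i ustar, K i qstar⟫ * (α i - αstar i)) ∧
      (∀ v : V, ⟪ιV ustar - udag, ιV v⟫ + ⟪ιX (A.symm (B qstar)), ιX (A.symm (B v))⟫
        + ∑ i, αstar i * ⟪K i qstar, K i v⟫ = 0) ∧
      (∀ v : V, 1 / (m : ℝ) * ∑ j, ⟪ιX (A.symm (B ustar)) - yδ j, ιX (A.symm (B v))⟫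
        + ∑ i, αstar i * ⟪K i ustar, K i v⟫ = 0) := by
  set S : V →L[ℝ] G := ιX ∘L A.symm ∘L B
  have hstate {α : Fin r → ℝ} (hα : α ∈ P) (u : V) :=
    solvesLin_symm_apply_iff hm A B ιX K hK (hPpos α hα) yδ u
  have hustar : tikhonovForm S K αstar ustar = dataFunctional S yδ :=
    (hstate hαstar ustar).1 hsol
  obtain ⟨q, hq⟩ := exists_apply_eq_of_isCoercive
    (isCoercive_tikhonovForm S K (hPpos αstar hαstar) hK) (tikhonovForm_symm S K αstar)
    (-(innerSL ℝ (ιV ustar - udag) ∘L ιV))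
  have hadjoint (v : V) : tikhonovForm S K αstar q v = -⟪ιV ustar - udag, ιV v⟫ :=
    DFunLike.congr_fun hq v
  refine ⟨q, fun α hα ↦ ?_, fun v ↦ ?_, fun v ↦ ?_⟩
  · have hnonneg : 0 ≤ penaltyForm K (α - αstar) ustar q := by
      refine penaltyForm_sub_apply_nonneg_of_forall_le S K hK (hPpos αstar hαstar) (hPpos α hα)
        (hasFDerivAt_half_norm_sub_sq ιV udag ustar)
        (fun v ↦ (tikhonovForm_symm S K αstar v q).trans (hadjoint v)) fun t ht w hw ↦ ?_
      have hmem : AffineMap.lineMap αstar α t ∈ P := hP.lineMap_mem hαstar hα ht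
      have hwsol := (hstate hmem w).2 (hw.trans hustar)
      exact mul_le_mul_of_nonneg_left (hopt _ hmem _ hwsol) one_half_pos.le
    simpa only [penaltyForm_apply, Pi.sub_apply, mul_comm] using hnonneg
  · rw [add_assoc, add_comm, ← eq_neg_iff_add_eq_zero, ← hadjoint v, tikhonovForm_apply]
    rfl
  · exact (tikhonovForm_sub_dataFunctional_apply S K hm αstar yδ ustar v).symm.trans
      (sub_eq_zero_of_eq (DFunLike.congr_fun hustar v))

/-- **Proposition 6.2** (optimality conditions for the learning problem with linear
state equation): under (L1) and (L2), every solution `(α*, A⁻¹Bu*, u*)` of `(LP_lin)`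
admits an adjoint state `q* ∈ U` satisfying the optimality system (i)–(iii). -/
theorem linear_learning_problem_optimality_conditions
    (hYrefl : Function.Surjective (NormedSpace.inclusionInDoubleDual ℝ Y))
    (hUrefl : Function.Surjective (NormedSpace.inclusionInDoubleDual ℝ U))
    {m r : ℕ} (hm : 0 < m) (hr : 0 < r)
    {E : Fin r → Type*} [∀ i, NormedAddCommGroup (E i)]
    [∀ i, InnerProductSpace ℝ (E i)] [∀ i, CompleteSpace (E i)]
    (ιY : Y →L[ℝ] Ytil) (hιY : Function.Injective ιY)
    (ιU : U →L[ℝ] Util) (hιU : Function.Injective ιU)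
    (A : Y →L[ℝ] Z) (B : U →L[ℝ] Z) (K : (i : Fin r) → U →L[ℝ] E i)
    (udag : Util) (yδ : Fin m → Ytil)
    (αlo αhi : Fin r → ℝ) (hαpos : ∀ i, 0 < αlo i) (hαle : ∀ i, αlo i ≤ αhi i)
    (hL1 : Function.Bijective A)
    (hL2 : ∃ ζ > (0 : ℝ), ∀ u : U, ζ * ‖u‖ ^ 2 ≤ ∑ i, ‖K i u‖ ^ 2)
    (αstar : Fin r → ℝ) (ustar : U)
    -- `(α*, A⁻¹Bu*, u*)` is a solution of the learning problem `(LP_lin)`: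
    (hαstar : ∀ i, αlo i ≤ αstar i ∧ αstar i ≤ αhi i)
    (hsol : SolvesLin A B ιY K αstar yδ ((Equiv.ofBijective A hL1).symm (B ustar), ustar))
    (hLPopt : ∀ α : Fin r → ℝ, (∀ i, αlo i ≤ α i ∧ α i ≤ αhi i) →
      ∀ q : Y × U, SolvesLin A B ιY K α yδ q →
        ‖ιU ustar - udag‖ ^ 2 ≤ ‖ιU q.2 - udag‖ ^ 2) :
    ∃ qstar : U,
      -- (i) variational inequality for the parameters
      (∀ α : Fin r → ℝ, (∀ i, αlo i ≤ α i ∧ α i ≤ αhi i) →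
        0 ≤ ∑ i, ⟪K i ustar, K i qstar⟫ * (α i - αstar i)) ∧
      -- (ii) adjoint equation of the learning problem
      (∀ v : U, ⟪ιU ustar - udag, ιU v⟫
          + ⟪ιY ((Equiv.ofBijective A hL1).symm (B qstar)),
              ιY ((Equiv.ofBijective A hL1).symm (B v))⟫
          + ∑ i, αstar i * ⟪K i qstar, K i v⟫ = 0) ∧
      -- (iii) optimality condition of the reduced lower level problem
      (∀ v : U, (1 / (m : ℝ)) *
            ∑ j, ⟪ιY ((Equiv.ofBijective A hL1).symm (B ustar)) - yδ j,
              ιY ((Equiv.ofBijective A hL1).symm (B v))⟫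
          + ∑ i, αstar i * ⟪K i ustar, K i v⟫ = 0) := by
  simp only [equivOfBijective_symm_apply] at hsol ⊢
  exact linear_learning_problem_optimality_conditions_general hm.ne' ιY ιU
    (.ofBijective A (LinearMap.ker_eq_bot.2 hL1.1) (LinearMap.range_eq_top.2 hL1.2)) B K udag yδ
    (convex_setOf_forall_le_and_le αlo αhi) (fun α hα i ↦ (hαpos i).trans_le (hα i).1) hL2
    hαstar hsol hLPopt
end
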